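/- C₁* < 1.3155; that is, there exists g ∈ A₁, not identically zero, with g(0) > 0 and ρ₁*(g)/g(0) < 1.3155. -/

import Mathlib

open MeasureTheory Filter
open scoped Classical

noncomputable section

/-- The Fourier transform `ĝ(α) = ∫ g(x) e^{-2πiαx} dx` of a real-valued function. -/
def fourierT (g : ℝ → ℝ) (α : ℝ) : ℂ :=
  ∫ x : ℝ, (g x : ℂ) * Complex.exp (-(2 * Real.pi * α * x : ℝ) * Complex.I)

/-- The class `A₁` of continuous, even, non-negative functions `g ∈ L¹(ℝ)`
with `ĝ(α) ≤ 0` for `|α| ≥ 1` (such `ĝ` is real-valued since `g` is even and real). -/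
def memA1 (g : ℝ → ℝ) : Prop :=
  Continuous g ∧ (∀ x, g (-x) = g x) ∧ (∀ x, 0 ≤ g x) ∧ MeasureTheory.Integrable g ∧
    ∀ α : ℝ, 1 ≤ |α| → (fourierT g α).re ≤ 0

/-- The functional `ρ₁(g) = ĝ(0) + ∫_{-1}^{1} ĝ(α)|α| dα`. -/
def rho1 (g : ℝ → ℝ) : ℝ :=
  (fourierT g 0).re + ∫ α in (-1 : ℝ)..1, (fourierT g α).re * |α|

/-- The constant `C₁ = inf ρ₁(g)/g(0)` over nonzero `g ∈ A₁` with `g(0) > 0`. -/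
def C1 : ℝ :=
  sInf {c : ℝ | ∃ g : ℝ → ℝ, memA1 g ∧ g ≠ 0 ∧ 0 < g 0 ∧ c = rho1 g / g 0}

/-- The functional `ρ₁*(g) = ĝ(0) + ∫_{-1}^{1} ĝ(α)|α| dα + ∫_{1≤|α|≤3/2} ĝ(α)(3/2-|α|) dα`. -/
def rho1star (g : ℝ → ℝ) : ℝ :=
  (fourierT g 0).re + (∫ α in (-1 : ℝ)..1, (fourierT g α).re * |α|) +
    ∫ α in {α : ℝ | 1 ≤ |α| ∧ |α| ≤ 3 / 2}, (fourierT g α).re * (3 / 2 - |α|)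

/-- The constant `C₁* = inf ρ₁*(g)/g(0)` over nonzero `g ∈ A₁` with `g(0) > 0`. -/
def C1star : ℝ :=
  sInf {c : ℝ | ∃ g : ℝ → ℝ, memA1 g ∧ g ≠ 0 ∧ 0 < g 0 ∧ c = rho1star g / g 0}

/-! ### The triangle function and its Fourier transform -/

/-- The triangle function. -/
def triL (t : ℝ) : ℝ := max 0 (1 - |t|)

/-- The Fejer-type kernel. -/
def fejS (u : ℝ) : ℝ := (Real.sinc (Real.pi * u)) ^ 2

lemma triL_cont : Continuous triL := by unfold triL; fun_prop

lemma triL_zero {t : ℝ} (h : 1 ≤ |t|) : triL t = 0 := by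
  unfold triL; exact max_eq_left (by linarith)

lemma triL_of_le {t : ℝ} (h : |t| ≤ 1) : triL t = 1 - |t| := by
  unfold triL; exact max_eq_right (by linarith)

lemma triL_neg (t : ℝ) : triL (-t) = triL t := by unfold triL; rw [abs_neg]

lemma fejS_cont : Continuous fejS := by
  unfold fejS
  exact (Real.continuous_sinc.comp (by fun_prop)).pow 2

lemma fejS_nonneg (u : ℝ) : 0 ≤ fejS u := sq_nonneg _

lemma fejS_neg (u : ℝ) : fejS (-u) = fejS u := by
  unfold fejS; rw [mul_neg, Real.sinc_neg]

lemma fejS_zero : fejS 0 = 1 := by simp [fejS]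

lemma fejS_le (u : ℝ) : fejS u ≤ 2 * (1 + u ^ 2)⁻¹ := by
  have h1 : fejS u ≤ 1 := by
    unfold fejS
    have := Real.abs_sinc_le_one (Real.pi * u)
    rw [← sq_abs]; nlinarith [abs_nonneg (Real.sinc (Real.pi * u))]
  have h2 : u ^ 2 * fejS u ≤ 1 := by
    by_cases hu : u = 0
    · subst hu; simp
    · have hpi := Real.pi_gt_three
      have hp : Real.pi * u ≠ 0 := mul_ne_zero Real.pi_ne_zero hu
      unfold fejS
      rw [Real.sinc_of_ne_zero hp]
      have hs := Real.sin_sq_le_one (Real.pi * u)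
      have : u ^ 2 * (Real.sin (Real.pi * u) / (Real.pi * u)) ^ 2
          = Real.sin (Real.pi * u) ^ 2 / Real.pi ^ 2 := by
        field_simp
      rw [this, div_le_one (by positivity)]
      nlinarith
  have h3 : (0 : ℝ) < 1 + u ^ 2 := by positivity
  rw [← div_eq_mul_inv, le_div_iff₀ h3]
  nlinarith

lemma fejS_int : Integrable fejS := by
  refine (integrable_inv_one_add_sq.const_mul 2).mono' fejS_cont.aestronglyMeasurable ?_
  refine Eventually.of_forall fun u => ?_
  rw [Real.norm_of_nonneg (fejS_nonneg u)]
  exact fejS_le u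

lemma triL_int : Integrable triL :=
  triL_cont.integrable_of_hasCompactSupport (by
    refine HasCompactSupport.intro (isCompact_Icc (a := (-1 : ℝ)) (b := 1)) fun x hx => ?_
    apply triL_zero
    by_contra hc
    exact hx (abs_le.mp (le_of_lt (not_le.mp hc))))

lemma exp_tri_right (a : ℂ) (ha : a ≠ 0) :
    ∫ v in (0 : ℝ)..1, (1 - (v : ℂ)) * Complex.exp (a * v)
      = Complex.exp a / a ^ 2 - 1 / a - 1 / a ^ 2 := by
  have hd : ∀ x ∈ Set.uIcc (0 : ℝ) 1, HasDerivAt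
      (fun v : ℝ => (1 - (v : ℂ)) * Complex.exp (a * v) / a + Complex.exp (a * v) / a ^ 2)
      ((1 - (x : ℂ)) * Complex.exp (a * x)) x := by
    intro x _
    have h1 : HasDerivAt (fun v : ℝ => (v : ℂ)) 1 x := Complex.ofRealCLM.hasDerivAt
    have h2 : HasDerivAt (fun v : ℝ => Complex.exp (a * v)) (Complex.exp (a * x) * (a * 1)) x :=
      (h1.const_mul a).cexp
    refine ((((h1.const_sub 1).mul h2).div_const a).add (h2.div_const (a ^ 2))).congr_deriv ?_
    field_simp
    ring
  rw [intervalIntegral.integral_eq_sub_of_hasDerivAt hd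
    (Continuous.intervalIntegrable (by fun_prop) _ _)]
  simp
  ring

lemma exp_tri_left (a : ℂ) (ha : a ≠ 0) :
    ∫ v in (-1 : ℝ)..0, (1 + (v : ℂ)) * Complex.exp (a * v)
      = Complex.exp (-a) / a ^ 2 + 1 / a - 1 / a ^ 2 := by
  have hd : ∀ x ∈ Set.uIcc (-1 : ℝ) 0, HasDerivAt
      (fun v : ℝ => (1 + (v : ℂ)) * Complex.exp (a * v) / a - Complex.exp (a * v) / a ^ 2)
      ((1 + (x : ℂ)) * Complex.exp (a * x)) x := by
    intro x _
    have h1 : HasDerivAt (fun v : ℝ => (v : ℂ)) 1 x := Complex.ofRealCLM.hasDerivAt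
    have h2 : HasDerivAt (fun v : ℝ => Complex.exp (a * v)) (Complex.exp (a * x) * (a * 1)) x :=
      (h1.const_mul a).cexp
    refine ((((h1.const_add 1).mul h2).div_const a).sub (h2.div_const (a ^ 2))).congr_deriv ?_
    field_simp
    ring
  rw [intervalIntegral.integral_eq_sub_of_hasDerivAt hd
    (Continuous.intervalIntegrable (by fun_prop) _ _)]
  simp
  ring

lemma fourier_triL (x : ℝ) (hx : x ≠ 0) :
    FourierTransform.fourier (fun v : ℝ => (triL v : ℂ)) x = (fejS x : ℂ) := by
  rw [Real.fourier_real_eq_integral_exp_smul]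
  set a : ℂ := -2 * Real.pi * x * Complex.I with ha
  have ha0 : a ≠ 0 := by
    rw [ha]; simp [hx, Real.pi_ne_zero]
  have hF : ∀ v : ℝ, Complex.exp (((-2 * Real.pi * v * x : ℝ) : ℂ) * Complex.I) • (triL v : ℂ)
      = (triL v : ℂ) * Complex.exp (a * v) := by
    intro v
    rw [smul_eq_mul, mul_comm, ha]; congr 2; push_cast; ring
  simp_rw [hF]
  have hc : Continuous fun v : ℝ => (triL v : ℂ) * Complex.exp (a * v) := by
    have := triL_cont
    fun_prop
  have e1 : ∫ v : ℝ, (triL v : ℂ) * Complex.exp (a * v)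
      = ∫ v in (-1 : ℝ)..1, (triL v : ℂ) * Complex.exp (a * v) := by
    rw [intervalIntegral.integral_of_le (by norm_num)]
    symm
    apply setIntegral_eq_integral_of_forall_compl_eq_zero
    intro v hv
    rw [triL_zero, Complex.ofReal_zero, zero_mul]
    by_contra hcon
    have := abs_lt.mp (not_le.mp hcon)
    exact hv ⟨this.1, this.2.le⟩
  rw [e1, ← intervalIntegral.integral_add_adjacent_intervals
    (hc.intervalIntegrable (-1) 0) (hc.intervalIntegrable 0 1)]
  have e2 : ∫ v in (-1 : ℝ)..0, (triL v : ℂ) * Complex.exp (a * v)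
      = ∫ v in (-1 : ℝ)..0, (1 + (v : ℂ)) * Complex.exp (a * v) := by
    apply intervalIntegral.integral_congr
    intro v hv
    rw [Set.uIcc_of_le (by norm_num)] at hv
    have : |v| = -v := abs_of_nonpos hv.2
    simp only
    rw [triL_of_le (by rw [this]; linarith [hv.1]), this]; push_cast; ring
  have e3 : ∫ v in (0 : ℝ)..1, (triL v : ℂ) * Complex.exp (a * v)
      = ∫ v in (0 : ℝ)..1, (1 - (v : ℂ)) * Complex.exp (a * v) := by
    apply intervalIntegral.integral_congr
    intro v hv
    rw [Set.uIcc_of_le (by norm_num)] at hv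
    have : |v| = v := abs_of_nonneg hv.1
    simp only
    rw [triL_of_le (by rw [this]; linarith [hv.2]), this]; push_cast; ring
  rw [e2, e3, exp_tri_left a ha0, exp_tri_right a ha0]
  have hcos : Complex.exp a + Complex.exp (-a) = 2 * ((Real.cos (2 * Real.pi * x) : ℝ) : ℂ) := by
    rw [Complex.ofReal_cos, Complex.cos, ha]
    push_cast
    rw [show (-2 * (Real.pi : ℂ) * x * Complex.I) = -(2 * Real.pi * x) * Complex.I by ring,
      show -(-(2 * (Real.pi : ℂ) * x) * Complex.I) = (2 * Real.pi * x) * Complex.I by ring]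
    ring
  have ha2 : a ^ 2 = ((-(4 * (Real.pi * x) ^ 2) : ℝ) : ℂ) := by
    rw [ha]; push_cast; ring_nf; rw [Complex.I_sq]; ring
  have hsum : Complex.exp (-a) / a ^ 2 + 1 / a - 1 / a ^ 2
      + (Complex.exp a / a ^ 2 - 1 / a - 1 / a ^ 2)
      = ((Complex.exp a + Complex.exp (-a)) - 2) / a ^ 2 := by ring
  rw [hsum, hcos, ha2]
  have hp : Real.pi * x ≠ 0 := mul_ne_zero Real.pi_ne_zero hx
  have : fejS x = (2 * Real.cos (2 * Real.pi * x) - 2) / (-(4 * (Real.pi * x) ^ 2)) := by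
    unfold fejS
    rw [Real.sinc_of_ne_zero hp, mul_assoc, Real.cos_two_mul, div_pow, Real.sin_sq]
    field_simp
    ring
  rw [this]; push_cast; ring

lemma cos_fejS_complex (t : ℝ) :
    ∫ u : ℝ, Complex.exp (((2 * Real.pi * u * t : ℝ) : ℂ) * Complex.I) * (fejS u : ℂ)
      = (triL t : ℂ) := by
  have hae : FourierTransform.fourier (fun v : ℝ => (triL v : ℂ))
      =ᵐ[volume] fun u => (fejS u : ℂ) := by
    have : ∀ᵐ u : ℝ ∂volume, u ≠ 0 := by
      simp [ae_iff]
    filter_upwards [this] with u hu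
    exact fourier_triL u hu
  have hI : Integrable (FourierTransform.fourier (fun v : ℝ => (triL v : ℂ))) :=
    (fejS_int.ofReal (𝕜 := ℂ)).congr hae.symm
  have hinv := Continuous.fourierInv_fourier_eq (f := fun v : ℝ => (triL v : ℂ))
    (Complex.continuous_ofReal.comp triL_cont) (triL_int.ofReal) hI
  have h2 := congrFun hinv t
  rw [Real.fourierInv_eq'] at h2
  rw [← h2]
  apply integral_congr_ae
  filter_upwards [hae] with u hu
  rw [hu, smul_eq_mul]
  congr 3
  simp
  ring

lemma cos_fejS (t : ℝ) :
    ∫ u : ℝ, fejS u * Real.cos (2 * Real.pi * t * u) = triL t := by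
  have h := congrArg Complex.re (cos_fejS_complex t)
  rw [Complex.ofReal_re] at h
  rw [← h]
  have hI : Integrable fun u : ℝ =>
      Complex.exp (((2 * Real.pi * u * t : ℝ) : ℂ) * Complex.I) * (fejS u : ℂ) := by
    refine (fejS_int.ofReal (𝕜 := ℂ)).bdd_mul (c := 1) ?_ ?_
    · exact (by fun_prop : Continuous fun u : ℝ =>
        Complex.exp (((2 * Real.pi * u * t : ℝ) : ℂ) * Complex.I)).aestronglyMeasurable
    · exact Eventually.of_forall fun u => (Complex.norm_exp_ofReal_mul_I _).le
  have := integral_re hI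
  simp only [RCLike.re_eq_complex_re] at this
  rw [← this]
  congr 1
  ext u
  rw [Complex.re_mul_ofReal, Complex.exp_ofReal_mul_I_re, mul_comm]
  congr 2
  ring

/-- Integral of the dilated kernel against a cosine. -/
lemma cos_fejS_dil (s : ℝ) :
    ∫ x : ℝ, fejS (x / 60) * Real.cos (2 * Real.pi * s * x) = 60 * triL (60 * s) := by
  have h := Measure.integral_comp_div (fun u : ℝ => fejS u * Real.cos (2 * Real.pi * (60 * s) * u)) 60
  rw [cos_fejS, abs_of_pos (by norm_num), smul_eq_mul] at h
  rw [← h]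
  congr 1
  ext x
  congr 2
  ring

lemma fejS_dil_int : Integrable fun x : ℝ => fejS (x / 60) :=
  fejS_int.comp_div (by norm_num)

lemma fejS_cos_int (s : ℝ) :
    Integrable fun x : ℝ => fejS (x / 60) * Real.cos (2 * Real.pi * s * x) := by
  have h := fejS_dil_int.bdd_mul (f := fun x : ℝ => Real.cos (2 * Real.pi * s * x)) (c := 1)
    (by fun_prop : Continuous fun x : ℝ => Real.cos (2 * Real.pi * s * x)).aestronglyMeasurable
    (Eventually.of_forall fun u => by rw [Real.norm_eq_abs]; exact Real.abs_cos_le_one _)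
  exact h.congr (Eventually.of_forall fun x => mul_comm _ _)

/-! ### The test function -/

/-- The test function attached to a finite real sequence. -/
def gF (f : ℕ → ℝ) (N : ℕ) (x : ℝ) : ℝ :=
  fejS (x / 60) * ((∑ j ∈ Finset.range N, f j * Real.cos (2 * Real.pi * (j / 60) * x)) ^ 2
    + (∑ j ∈ Finset.range N, f j * Real.sin (2 * Real.pi * (j / 60) * x)) ^ 2)

/-- Its (explicit) Fourier transform. -/
def phiF (f : ℕ → ℝ) (N : ℕ) (α : ℝ) : ℝ :=
  60 * ∑ j ∈ Finset.range N, ∑ l ∈ Finset.range N, f j * f l * triL (60 * α - (j - l))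

/-- The autocorrelation. -/
def acF (f : ℕ → ℝ) (N : ℕ) (n : ℕ) : ℝ := ∑ l ∈ Finset.range N, f l * f (l + n)

lemma gF_cont (f : ℕ → ℝ) (N : ℕ) : Continuous (gF f N) := by
  unfold gF
  have := fejS_cont
  fun_prop

lemma gF_nonneg (f : ℕ → ℝ) (N : ℕ) (x : ℝ) : 0 ≤ gF f N x := by
  unfold gF
  have := fejS_nonneg (x / 60)
  positivity

lemma gF_even (f : ℕ → ℝ) (N : ℕ) (x : ℝ) : gF f N (-x) = gF f N x := by
  unfold gF
  simp only [neg_div, fejS_neg, mul_neg, Real.cos_neg, Real.sin_neg, Finset.sum_neg_distrib,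
    neg_sq]

lemma gF_zero (f : ℕ → ℝ) (N : ℕ) : gF f N 0 = (∑ j ∈ Finset.range N, f j) ^ 2 := by
  simp [gF, fejS_zero]

lemma gF_expand (f : ℕ → ℝ) (N : ℕ) (x : ℝ) :
    gF f N x = ∑ j ∈ Finset.range N, ∑ l ∈ Finset.range N,
      f j * f l * (fejS (x / 60) * Real.cos (2 * Real.pi * ((j - l) / 60) * x)) := by
  unfold gF
  rw [sq, sq, Finset.sum_mul_sum, Finset.sum_mul_sum, ← Finset.sum_add_distrib, Finset.mul_sum]
  refine Finset.sum_congr rfl fun j _ => ?_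
  rw [← Finset.sum_add_distrib, Finset.mul_sum]
  refine Finset.sum_congr rfl fun l _ => ?_
  rw [show 2 * Real.pi * (((j : ℝ) - l) / 60) * x
    = 2 * Real.pi * ((j : ℝ) / 60) * x - 2 * Real.pi * ((l : ℝ) / 60) * x by ring, Real.cos_sub]
  ring

lemma gF_int (f : ℕ → ℝ) (N : ℕ) : Integrable (gF f N) := by
  have : gF f N = fun x => ∑ j ∈ Finset.range N, ∑ l ∈ Finset.range N,
      f j * f l * (fejS (x / 60) * Real.cos (2 * Real.pi * ((j - l) / 60) * x)) := by
    ext x; exact gF_expand f N x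
  rw [this]
  exact integrable_finsetSum _ fun j _ => integrable_finsetSum _ fun l _ =>
    (fejS_cos_int _).const_mul _

lemma fourierT_re (g : ℝ → ℝ) (hg : Integrable g) (α : ℝ) :
    (fourierT g α).re = ∫ x : ℝ, g x * Real.cos (2 * Real.pi * α * x) := by
  unfold fourierT
  have hI : Integrable fun x : ℝ =>
      (g x : ℂ) * Complex.exp (-(2 * Real.pi * α * x : ℝ) * Complex.I) := by
    have h := (hg.ofReal (𝕜 := ℂ)).bdd_mul (c := 1)
      (f := fun x : ℝ => Complex.exp (-(2 * Real.pi * α * x : ℝ) * Complex.I))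
      (by fun_prop : Continuous fun x : ℝ =>
        Complex.exp (-(2 * Real.pi * α * x : ℝ) * Complex.I)).aestronglyMeasurable
      (Eventually.of_forall fun x => by
        rw [← Complex.ofReal_neg]; exact (Complex.norm_exp_ofReal_mul_I _).le)
    exact h.congr (Eventually.of_forall fun x => mul_comm _ _)
  have := integral_re hI
  simp only [RCLike.re_eq_complex_re] at this
  rw [← this]
  congr 1
  ext x
  rw [Complex.re_ofReal_mul, ← Complex.ofReal_neg, Complex.exp_ofReal_mul_I_re, Real.cos_neg]

lemma basic_int (m α : ℝ) :
    (Integrable fun x : ℝ => fejS (x / 60) * Real.cos (2 * Real.pi * (m / 60) * x)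
        * Real.cos (2 * Real.pi * α * x)) ∧
    ∫ x : ℝ, fejS (x / 60) * Real.cos (2 * Real.pi * (m / 60) * x)
        * Real.cos (2 * Real.pi * α * x)
      = 30 * (triL (60 * α - m) + triL (60 * α + m)) := by
  have hE : (fun x : ℝ => fejS (x / 60) * Real.cos (2 * Real.pi * (m / 60) * x)
        * Real.cos (2 * Real.pi * α * x))
      = fun x => (1 / 2) * (fejS (x / 60) * Real.cos (2 * Real.pi * (α - m / 60) * x))
        + (1 / 2) * (fejS (x / 60) * Real.cos (2 * Real.pi * (α + m / 60) * x)) := by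
    ext x
    rw [show 2 * Real.pi * (α - m / 60) * x
        = 2 * Real.pi * α * x - 2 * Real.pi * (m / 60) * x by ring,
      show 2 * Real.pi * (α + m / 60) * x
        = 2 * Real.pi * α * x + 2 * Real.pi * (m / 60) * x by ring,
      Real.cos_sub, Real.cos_add]
    ring
  have i1 := (fejS_cos_int (α - m / 60)).const_mul (1 / 2)
  have i2 := (fejS_cos_int (α + m / 60)).const_mul (1 / 2)
  rw [hE]
  refine ⟨i1.add i2, ?_⟩
  rw [integral_add i1 i2, integral_const_mul, integral_const_mul, cos_fejS_dil, cos_fejS_dil,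
    show 60 * (α - m / 60) = 60 * α - m by ring, show 60 * (α + m / 60) = 60 * α + m by ring]
  ring

lemma gF_fourier (f : ℕ → ℝ) (N : ℕ) (α : ℝ) : (fourierT (gF f N) α).re = phiF f N α := by
  rw [fourierT_re _ (gF_int f N)]
  have hE : ∀ x : ℝ, gF f N x * Real.cos (2 * Real.pi * α * x)
      = ∑ j ∈ Finset.range N, ∑ l ∈ Finset.range N,
        f j * f l * (fejS (x / 60) * Real.cos (2 * Real.pi * ((j - l) / 60) * x)
          * Real.cos (2 * Real.pi * α * x)) := by
    intro x
    rw [gF_expand, Finset.sum_mul]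
    refine Finset.sum_congr rfl fun j _ => ?_
    rw [Finset.sum_mul]
    refine Finset.sum_congr rfl fun l _ => ?_
    ring
  simp_rw [hE]
  rw [integral_finsetSum _ fun j _ => integrable_finsetSum _ fun l _ =>
    (basic_int _ _).1.const_mul _]
  have h2 : ∀ j ∈ Finset.range N,
      ∫ x : ℝ, ∑ l ∈ Finset.range N,
        f j * f l * (fejS (x / 60) * Real.cos (2 * Real.pi * (((j : ℝ) - l) / 60) * x)
          * Real.cos (2 * Real.pi * α * x))
      = ∑ l ∈ Finset.range N, (30 * (f j * f l * triL (60 * α - (j - l)))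
          + 30 * (f l * f j * triL (60 * α - (l - j)))) := by
    intro j _
    rw [integral_finsetSum _ fun l _ => (basic_int _ _).1.const_mul _]
    refine Finset.sum_congr rfl fun l _ => ?_
    rw [integral_const_mul, (basic_int _ _).2,
      show 60 * α + ((j : ℝ) - l) = 60 * α - (l - j) by ring]
    ring
  rw [Finset.sum_congr rfl h2]
  simp_rw [Finset.sum_add_distrib]
  rw [Finset.sum_comm (f := fun j l : ℕ => 30 * (f l * f j * triL (60 * α - (l - j))))]
  unfold phiF
  simp_rw [← Finset.mul_sum]
  ring

lemma phiF_cont (f : ℕ → ℝ) (N : ℕ) : Continuous (phiF f N) := by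
  unfold phiF
  have := triL_cont
  fun_prop

lemma gF_fourier_even (f : ℕ → ℝ) (N : ℕ) (α : ℝ) : phiF f N (-α) = phiF f N α := by
  rw [← gF_fourier, ← gF_fourier, fourierT_re _ (gF_int f N), fourierT_re _ (gF_int f N)]
  congr 1
  ext x
  rw [show 2 * Real.pi * -α * x = -(2 * Real.pi * α * x) by ring, Real.cos_neg]

lemma triL_int_shift (n : ℕ) (m : ℤ) (β : ℝ) (h1 : (n : ℝ) ≤ β) (h2 : β ≤ n + 1) :
    triL (β - m) = (n + 1 - β) * (if m = n then 1 else 0)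
      + (β - n) * (if m = n + 1 then 1 else 0) := by
  rcases lt_trichotomy m (n : ℤ) with h | h | h
  · have hm : (m : ℝ) + 1 ≤ n := by exact_mod_cast h
    rw [if_neg (by omega), if_neg (by omega), triL_zero]
    · ring
    · rw [abs_of_nonneg (by linarith)]; linarith
  · have hm : (m : ℝ) = n := by exact_mod_cast h
    rw [if_pos h, if_neg (by omega), triL_of_le, abs_of_nonneg (by linarith), hm]
    · ring
    · rw [abs_of_nonneg (by linarith)]; linarith
  · by_cases h' : m = n + 1
    · have hm : (m : ℝ) = n + 1 := by rw [h']; push_cast; ring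
      rw [if_neg (by omega), if_pos h', triL_of_le, abs_of_nonpos (by linarith), hm]
      · ring
      · rw [abs_of_nonpos (by linarith)]; linarith
    · have hm : (n : ℝ) + 2 ≤ m := by
        have : (n : ℤ) + 2 ≤ m := by omega
        exact_mod_cast this
      rw [if_neg (by omega), if_neg (by omega), triL_zero]
      · ring
      · rw [abs_of_nonpos (by linarith)]; linarith

lemma sum_shift (f : ℕ → ℝ) (N n : ℕ) (hf : ∀ i, N ≤ i → f i = 0) :
    ∑ j ∈ Finset.range N, ∑ l ∈ Finset.range N,
      f j * f l * (if (j : ℤ) - l = n then 1 else 0) = acF f N n := by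
  rw [Finset.sum_comm]
  unfold acF
  refine Finset.sum_congr rfl fun l _ => ?_
  have : ∀ j ∈ Finset.range N, f j * f l * (if (j : ℤ) - l = n then 1 else 0)
      = if j = l + n then f l * f j else 0 := by
    intro j _
    by_cases h : j = l + n
    · rw [if_pos h, if_pos (by omega)]; ring
    · rw [if_neg h, if_neg (by omega)]; ring
  rw [Finset.sum_congr rfl this, Finset.sum_ite_eq']
  split_ifs with h
  · rfl
  · rw [hf (l + n) (by simpa using h)]; ring

lemma phiF_piece (f : ℕ → ℝ) (N : ℕ) (hf : ∀ i, N ≤ i → f i = 0) (n : ℕ) (α : ℝ)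
    (h1 : (n : ℝ) ≤ 60 * α) (h2 : 60 * α ≤ n + 1) :
    phiF f N α = 60 * ((n + 1 - 60 * α) * acF f N n + (60 * α - n) * acF f N (n + 1)) := by
  unfold phiF
  rw [← sum_shift f N n hf, ← sum_shift f N (n + 1) hf]
  congr 1
  rw [Finset.mul_sum, Finset.mul_sum, ← Finset.sum_add_distrib]
  refine Finset.sum_congr rfl fun j _ => ?_
  rw [Finset.mul_sum, Finset.mul_sum, ← Finset.sum_add_distrib]
  refine Finset.sum_congr rfl fun l _ => ?_
  have h := triL_int_shift n ((j : ℤ) - l) (60 * α) h1 h2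
  push_cast at h ⊢
  rw [h]
  ring

lemma phiF_neg (f : ℕ → ℝ) (N : ℕ) (hf : ∀ i, N ≤ i → f i = 0)
    (hc : ∀ n, 60 ≤ n → acF f N n ≤ 0) (α : ℝ) (hα : 1 ≤ |α|) : phiF f N α ≤ 0 := by
  wlog hp : 0 ≤ α generalizing α
  · rw [← gF_fourier_even]
    exact this (-α) (by rwa [abs_neg]) (by linarith)
  rw [abs_of_nonneg hp] at hα
  have h1 : ((⌊60 * α⌋₊ : ℕ) : ℝ) ≤ 60 * α := Nat.floor_le (by linarith)
  have h2 : 60 * α ≤ (⌊60 * α⌋₊ : ℕ) + 1 := (Nat.lt_floor_add_one _).le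
  have h3 : 60 ≤ ⌊60 * α⌋₊ := Nat.le_floor (by push_cast; linarith)
  rw [phiF_piece f N hf _ α h1 h2]
  have e1 := hc _ h3
  have e2 := hc (⌊60 * α⌋₊ + 1) (by omega)
  nlinarith [mul_nonneg_of_nonpos_of_nonpos e1 (by linarith : -((⌊60 * α⌋₊ : ℕ) + 1 - 60 * α) ≤ 0),
    mul_nonneg_of_nonpos_of_nonpos e2 (by linarith : -(60 * α - (⌊60 * α⌋₊ : ℕ)) ≤ 0)]

lemma memA1_gF (f : ℕ → ℝ) (N : ℕ) (hf : ∀ i, N ≤ i → f i = 0)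
    (hc : ∀ n, 60 ≤ n → acF f N n ≤ 0) : memA1 (gF f N) :=
  ⟨gF_cont f N, gF_even f N, gF_nonneg f N, gF_int f N, fun α hα => by
    rw [gF_fourier]; exact phiF_neg f N hf hc α hα⟩

/-- A cubic integral on one cell. -/
lemma cell_int (n : ℕ) (a b p q : ℝ) :
    ∫ α in ((n : ℝ) / 60)..((n + 1 : ℕ) : ℝ) / 60,
      60 * ((n + 1 - 60 * α) * a + (60 * α - n) * b) * (p + q * α)
    = a * ((p + q * (n / 60)) / 2 + q / 360) + b * ((p + q * (n / 60)) / 2 + q / 180) := by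
  have hd : ∀ x ∈ Set.uIcc ((n : ℝ) / 60) (((n + 1 : ℕ) : ℝ) / 60), HasDerivAt
      (fun α : ℝ => 60 * (((n + 1) * a - n * b) * p * α
        + (((n + 1) * a - n * b) * q + 60 * (b - a) * p) * (α ^ 2 / 2)
        + 60 * (b - a) * q * (α ^ 3 / 3)))
      (60 * ((n + 1 - 60 * x) * a + (60 * x - n) * b) * (p + q * x)) x := by
    intro x _
    have h1 := (hasDerivAt_id' x).const_mul (((n + 1) * a - n * b) * p)
    have h2 := ((hasDerivAt_pow 2 x).div_const 2).const_mul
      (((n + 1) * a - n * b) * q + 60 * (b - a) * p)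
    have h3 := ((hasDerivAt_pow 3 x).div_const 3).const_mul (60 * (b - a) * q)
    refine (((h1.add h2).add h3).const_mul 60).congr_deriv ?_
    push_cast
    ring
  rw [intervalIntegral.integral_eq_sub_of_hasDerivAt hd
    (Continuous.intervalIntegrable (by fun_prop) _ _)]
  push_cast
  ring

lemma range_int (f : ℕ → ℝ) (N : ℕ) (hf : ∀ i, N ≤ i → f i = 0) (m k : ℕ) (p q : ℝ) :
    ∫ α in ((m : ℝ) / 60)..((m + k : ℕ) : ℝ) / 60, phiF f N α * (p + q * α)
    = ∑ i ∈ Finset.range k, (acF f N (m + i) * ((p + q * ((m + i : ℕ) / 60)) / 2 + q / 360)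
        + acF f N (m + i + 1) * ((p + q * ((m + i : ℕ) / 60)) / 2 + q / 180)) := by
  have hc : Continuous fun α => phiF f N α * (p + q * α) := by
    have := phiF_cont f N
    fun_prop
  have h := intervalIntegral.sum_integral_adjacent_intervals (μ := volume)
    (f := fun α => phiF f N α * (p + q * α)) (a := fun i : ℕ => ((m + i : ℕ) : ℝ) / 60) (n := k)
    (fun _ _ => hc.intervalIntegrable _ _)
  rw [Nat.add_zero] at h
  rw [← h]
  refine Finset.sum_congr rfl fun i _ => ?_
  rw [← cell_int]
  apply intervalIntegral.integral_congr
  intro α hα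
  rw [Set.uIcc_of_le (by push_cast; linarith)] at hα
  obtain ⟨ha, hb⟩ := hα
  simp only
  push_cast at ha hb
  rw [phiF_piece f N hf (m + i) α (by push_cast; linarith) (by push_cast; linarith)]

lemma int_even (F : ℝ → ℝ) (hF : Continuous F) (he : ∀ x, F (-x) = F x) (a b : ℝ) :
    ∫ x in (-b)..(-a), F x = ∫ x in a..b, F x := by
  rw [← intervalIntegral.integral_comp_neg]
  simp_rw [he]

lemma rho_gF (f : ℕ → ℝ) (N : ℕ) (hf : ∀ i, N ≤ i → f i = 0) :
    rho1star (gF f N) = 60 * acF f N 0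
      + (1 / 180) * (∑ i ∈ Finset.range 60,
          (acF f N i * (3 * i + 1) + acF f N (i + 1) * (3 * i + 2)))
      + (1 / 180) * (∑ i ∈ Finset.range 30,
          (acF f N (60 + i) * (89 - 3 * i) + acF f N (60 + i + 1) * (88 - 3 * i))) := by
  unfold rho1star
  simp_rw [gF_fourier]
  have hcont := phiF_cont f N
  have c1 : Continuous fun α => phiF f N α * |α| := by fun_prop
  have c2 : Continuous fun α => phiF f N α * (3 / 2 - |α|) := by fun_prop
  have e0 : phiF f N 0 = 60 * acF f N 0 := by
    rw [phiF_piece f N hf 0 0 (by simp) (by simp)]; simp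
  have e1 : ∫ α in (-1 : ℝ)..1, phiF f N α * |α|
      = 2 * ∫ α in (0 : ℝ)..1, phiF f N α * (0 + 1 * α) := by
    rw [← intervalIntegral.integral_add_adjacent_intervals
      (c1.intervalIntegrable (-1) 0) (c1.intervalIntegrable 0 1)]
    have := int_even _ c1 (fun x => by rw [gF_fourier_even, abs_neg]) 0 1
    rw [neg_zero] at this
    rw [this, two_mul]
    have h : ∫ α in (0 : ℝ)..1, phiF f N α * |α|
        = ∫ α in (0 : ℝ)..1, phiF f N α * (0 + 1 * α) := by
      apply intervalIntegral.integral_congr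
      intro α hα
      rw [Set.uIcc_of_le (by norm_num)] at hα
      simp only
      rw [abs_of_nonneg hα.1]; ring
    rw [h]
  have e2 : ∫ α in {α : ℝ | 1 ≤ |α| ∧ |α| ≤ 3 / 2}, phiF f N α * (3 / 2 - |α|)
      = 2 * ∫ α in (1 : ℝ)..(3 / 2), phiF f N α * (3 / 2 + (-1) * α) := by
    have hset : {α : ℝ | 1 ≤ |α| ∧ |α| ≤ 3 / 2}
        = Set.Icc (-(3 / 2)) (-1) ∪ Set.Icc 1 (3 / 2) := by
      ext α
      simp only [Set.mem_ofPred_eq, Set.mem_union, Set.mem_Icc]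
      constructor
      · rintro ⟨h1, h2⟩
        rcases le_total 0 α with h | h
        · rw [abs_of_nonneg h] at h1 h2; right; exact ⟨h1, h2⟩
        · rw [abs_of_nonpos h] at h1 h2; left; constructor <;> linarith
      · rintro (⟨h1, h2⟩ | ⟨h1, h2⟩)
        · rw [abs_of_nonpos (by linarith)]; constructor <;> linarith
        · rw [abs_of_nonneg (by linarith)]; constructor <;> linarith
    have hdisj : Disjoint (Set.Icc (-(3 / 2) : ℝ) (-1)) (Set.Icc 1 (3 / 2)) := by
      rw [Set.disjoint_left]
      intro x hx hy
      linarith [hx.2, hy.1]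
    rw [hset, setIntegral_union hdisj measurableSet_Icc
      (c2.integrableOn_Icc) (c2.integrableOn_Icc), integral_Icc_eq_integral_Ioc,
      integral_Icc_eq_integral_Ioc, ← intervalIntegral.integral_of_le (by norm_num),
      ← intervalIntegral.integral_of_le (by norm_num),
      int_even _ c2 (fun x => by rw [gF_fourier_even, abs_neg]) 1 (3 / 2), two_mul]
    have h : ∫ α in (1 : ℝ)..(3 / 2), phiF f N α * (3 / 2 - |α|)
        = ∫ α in (1 : ℝ)..(3 / 2), phiF f N α * (3 / 2 + (-1) * α) := by
      apply intervalIntegral.integral_congr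
      intro α hα
      rw [Set.uIcc_of_le (by norm_num)] at hα
      simp only
      rw [abs_of_nonneg (by linarith [hα.1])]; ring
    rw [h]
  have r1 := range_int f N hf 0 60 0 1
  have r2 := range_int f N hf 60 30 (3 / 2) (-1)
  rw [show ((0 : ℕ) : ℝ) / 60 = 0 by simp, show ((0 + 60 : ℕ) : ℝ) / 60 = 1 by norm_num] at r1
  rw [show ((60 : ℕ) : ℝ) / 60 = 1 by norm_num,
    show ((60 + 30 : ℕ) : ℝ) / 60 = 3 / 2 by norm_num] at r2
  rw [e0, e1, e2, r1, r2, Finset.mul_sum, Finset.mul_sum, Finset.mul_sum, Finset.mul_sum]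
  congr 1
  · congr 1
    refine Finset.sum_congr rfl fun i _ => ?_
    rw [Nat.zero_add]
    ring
  · refine Finset.sum_congr rfl fun i _ => ?_
    push_cast
    ring

/-! ### The data -/

/-- Coefficients, found numerically. -/
def coefL : List ℤ := [
   4736372, 8359458, 12306988, 16322566, 20337559, 24454182, 29004659, 33821718,
   38952749, 44474722, 50469099, 56264395, 62136655, 68275613, 74704416, 81687552,
   87793807, 93786277, 99601693, 105367161, 111121871, 116888189, 121837179, 126628414,
   130992015, 134970877, 138828995, 142616653, 146511821, 150314582, 153702714, 156475377,
   158386330, 159515653, 159905784, 159560429, 158242670, 155874967, 153536715, 151347277,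
   149984467, 148819876, 147172380, 145400554, 144326749, 142992792, 141673041, 140447062,
   139271596, 137988574, 136591135, 135169658, 133733583, 132344951, 131219390, 130257241,
   129172761, 127966626, 126665633, 125515268, 120581973, 116051021, 111382581, 106673612,
   101934526, 96990554, 91885501, 86607135, 81374378, 75935641, 70297729, 65384603,
   60308355, 54880565, 49187571, 42999121, 37058551, 31061657, 25057272, 18875208,
   12699739, 7162048, 1135919, -3931160, -8239882, -11801784, -15071629, -18236499,
   -21153781, -23879719, -26077704, -27597085, -28101306, -27808889, -26853647, -25124935,
   -22620188, -19608796, -15740347, -11972908, -9772672, -8649740, -7414695, -6113097,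
   -5142245, -4026053, -3010816, -2169077, -1481028, -914193, -339523, 385160,
   1151911, 1845545, 2364266, 2597461, 2691326, 2705520, 2710337, 2403063,
   2427222, 2251811, 1891198, 1493980, 1186757, 1361074, 1210090, 1277885,
   992390, 480350, -395116, -2288212, -3867651, -4890290, -5399851, -5497597,
   -4934911, -3895118, -2535479, -916085, 397138, -188747, 1524237, 2573142,
   3149200, 3307790, 3374575, 3427617, 3257300, 3100120, 2861571, 2540188,
   2050083, 1549104, 1065569, 503936, -89588, -655558, -1904502, -3197848,
   -3495562, -2800217, -1825815, -989885, -945245, -845978, -674227, -427751,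
   -74637, 398264, 771026, 869173, 804475, 606851, 285778, 111407,
   -4505, -183091, -534657, -1350237, -1318822, -1087448, -642294, -160223,
   137566, -113208, 5370, -180349, -245633, -161211, 201234, 1055539,
   1585766, 1693000, 1417068, 1139604, 546058, -188071, -953153, -1646868,
   -1766114]

/-- Dot product of two integer lists. -/
def dotL : List ℤ → List ℤ → ℤ
  | [], _ => 0
  | _ :: _, [] => 0
  | a :: as, b :: bs => a * b + dotL as bs

/-- Autocorrelation of the coefficient list. -/
def cZ (n : ℕ) : ℤ := dotL coefL (coefL.drop n)

/-- The coefficients as a real sequence. -/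
def coefF (i : ℕ) : ℝ := ((coefL.getD i 0 : ℤ) : ℝ)

lemma coefL_length : coefL.length = 201 := by decide +kernel

lemma dotL_eq : ∀ (A B : List ℤ) (N : ℕ), A.length ≤ N →
    dotL A B = ∑ l ∈ Finset.range N, A.getD l 0 * B.getD l 0
  | [], B, N, _ => by simp [dotL]
  | a :: as, [], N, _ => by simp [dotL]
  | a :: as, b :: bs, 0, h => by simp at h
  | a :: as, b :: bs, N + 1, h => by
    rw [Finset.sum_range_succ', dotL, dotL_eq as bs N (by simpa using h)]
    simp [add_comm]

lemma acF_coef (n : ℕ) : acF coefF 201 n = (cZ n : ℝ) := by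
  unfold acF cZ coefF
  rw [dotL_eq _ _ 201 coefL_length.le]
  push_cast
  refine Finset.sum_congr rfl fun l _ => ?_
  congr 2
  simp only [List.getD_eq_getElem?_getD, List.getElem?_drop]
  rw [add_comm]

lemma coefF_zero (i : ℕ) (h : 201 ≤ i) : coefF i = 0 := by
  unfold coefF
  rw [List.getD_eq_default _ _ (by rw [coefL_length]; exact h)]
  simp

lemma cZ_neg_aux : ∀ n ∈ List.range 141, cZ (60 + n) ≤ 0 := by decide +kernel

lemma cZ_neg (n : ℕ) (h : 60 ≤ n) : cZ n ≤ 0 := by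
  by_cases h' : n < 201
  · have := cZ_neg_aux (n - 60) (by rw [List.mem_range]; omega)
    rwa [Nat.add_sub_cancel' h] at this
  · unfold cZ
    rw [List.drop_eq_nil_of_le (by rw [coefL_length]; omega), dotL_eq _ _ 201 coefL_length.le]
    simp

lemma coef_sum : ∑ j ∈ Finset.range 201, coefF j = ((coefL.sum : ℤ) : ℝ) := by
  have h : coefL.sum = ∑ j ∈ Finset.range 201, coefL.getD j 0 := by decide +kernel
  rw [h]
  push_cast
  rfl

lemma rho_num : 10000 * (180 * 60 * cZ 0
      + ∑ i ∈ Finset.range 60, (cZ i * (3 * i + 1) + cZ (i + 1) * (3 * i + 2))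
      + ∑ i ∈ Finset.range 30, (cZ (60 + i) * (89 - 3 * i) + cZ (60 + i + 1) * (88 - 3 * i)))
    < 13155 * 180 * coefL.sum ^ 2 := by
  decide +kernel

lemma sum_pos_num : 0 < coefL.sum := by decide +kernel

lemma main_exists :
    ∃ g : ℝ → ℝ, memA1 g ∧ g ≠ 0 ∧ 0 < g 0 ∧ rho1star g / g 0 < 1.3155 := by
  have hs : (0 : ℝ) < ((coefL.sum : ℤ) : ℝ) := by exact_mod_cast sum_pos_num
  have h0 : gF coefF 201 0 = ((coefL.sum : ℤ) : ℝ) ^ 2 := by rw [gF_zero, coef_sum]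
  have hpos : 0 < gF coefF 201 0 := by rw [h0]; positivity
  refine ⟨gF coefF 201, memA1_gF _ _ coefF_zero ?_, ?_, hpos, ?_⟩
  · intro n hn
    rw [acF_coef]
    exact_mod_cast cZ_neg n hn
  · intro h
    rw [h] at hpos
    simp at hpos
  · rw [div_lt_iff₀ hpos, h0, rho_gF _ _ coefF_zero]
    simp only [acF_coef]
    have h := rho_num
    have h' : (10000 : ℝ) * (180 * 60 * (cZ 0 : ℝ)
        + ∑ i ∈ Finset.range 60, ((cZ i : ℝ) * (3 * i + 1) + (cZ (i + 1) : ℝ) * (3 * i + 2))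
        + ∑ i ∈ Finset.range 30,
          ((cZ (60 + i) : ℝ) * (89 - 3 * i) + (cZ (60 + i + 1) : ℝ) * (88 - 3 * i)))
        < 13155 * 180 * ((coefL.sum : ℤ) : ℝ) ^ 2 := by
      exact_mod_cast h
    linarith

/-- `C₁* < 1.3155`: there exists a nonzero `g ∈ A₁` with `g(0) > 0` and
`ρ₁*(g)/g(0) < 1.3155`. -/
theorem statement17 :
    C1star < 1.3155 ∧
      ∃ g : ℝ → ℝ, memA1 g ∧ g ≠ 0 ∧ 0 < g 0 ∧ rho1star g / g 0 < 1.3155 := by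
  obtain ⟨g, hg, hne, hpos, hlt⟩ := main_exists
  refine ⟨?_, g, hg, hne, hpos, hlt⟩
  unfold C1star
  by_cases hb : BddBelow {c : ℝ | ∃ g : ℝ → ℝ, memA1 g ∧ g ≠ 0 ∧ 0 < g 0 ∧ c = rho1star g / g 0}
  · exact lt_of_le_of_lt (csInf_le hb ⟨g, hg, hne, hpos, rfl⟩) hlt
  · rw [Real.sInf_of_not_bddBelow hb]
    norm_num

end
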